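/- Let F be a finite field with q elements, b a natural number, and V = (Fin b → F). For every F-subspace W of V, the alternating sum ∑_{S ⊆ ℋ, ⋂S = W} (−1)^{|S|}, taken over all finite subsets S of the set ℋ of hyperplanes of V whose intersection equals W, is nonzero. -/

import Mathlib

/-!
Write `f W = ∑_{S ⊆ ℋ, ⋂S = W} (-1)^|S|`. The proof shows that `f W` has the sign `(-1)^k`, where `k`
is the codimension of `W`, by induction on `k` (a Weisner-type recursion for the Möbius function of
the subspace lattice).

For `k = 0` only `S = ∅` contributes. For `k > 0` choose a hyperplane `H ⊇ W`. Inserting `H` into, or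
removing it from, `S` does not change `(⋂S) ⊓ H` but flips the sign, so the sum of `(-1)^|S|` over all
`S` with `(⋂S) ⊓ H = W` vanishes (`sum_inf_inf_eq_zero`). Grouping by `U = ⋂S` turns this into
`∑_{U ⊓ H = W} f U = 0` (`sum_altSum_eq_zero`). Every such `U ≠ W` has codimension `k - 1`
(`finrank_of_inf_eq`), and at least one exists (`exists_inf_eq`), so `f W` is minus a nonempty sum of
terms of sign `(-1)^(k-1)`.
-/

open Classical in
/-- The alternating sum of `(-1)^|S|` over the subsets `S` of `A` with meet `W`. -/
noncomputable def altSum {L : Type*} [SemilatticeInf L] [OrderTop L] (A : Finset L) (W : L) : ℤ :=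
  ∑ S ∈ A.powerset.filter (fun S => S.inf id = W), (-1 : ℤ) ^ S.card

open Classical in
/-- Toggling membership of `H` in `S` is a sign-reversing involution preserving `(⋂S) ⊓ H`. -/
lemma sum_inf_inf_eq_zero {L : Type*} [SemilatticeInf L] [OrderTop L] (A : Finset L) (H W : L)
    (hH : H ∈ A) :
    ∑ S ∈ A.powerset.filter (fun S => S.inf id ⊓ H = W), (-1 : ℤ) ^ S.card = 0 := by
  rw [Finset.sum_filter, ← Finset.insert_erase hH,
    Finset.sum_powerset_insert (Finset.notMem_erase H A), ← Finset.sum_add_distrib]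
  refine Finset.sum_eq_zero fun S hS => ?_
  have hn : H ∉ S := fun h => Finset.notMem_erase H A (Finset.mem_powerset.1 hS h)
  have he : (insert H S).inf id ⊓ H = S.inf id ⊓ H := by
    rw [Finset.inf_insert, id, inf_comm, ← inf_assoc, inf_idem, inf_comm]
  rw [he, Finset.card_insert_of_notMem hn, pow_succ]
  split_ifs <;> ring

open Classical in
/-- The recursion for `altSum` obtained by grouping the vanishing sum according to `U = ⋂S`. -/
lemma sum_altSum_eq_zero {L : Type*} [SemilatticeInf L] [OrderTop L] [Fintype L] (A : Finset L)
    (H W : L) (hH : H ∈ A) :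
    ∑ U ∈ Finset.univ.filter (fun U => U ⊓ H = W), altSum A U = 0 := by
  rw [← sum_inf_inf_eq_zero A H W hH,
    ← Finset.sum_fiberwise_of_maps_to (t := Finset.univ.filter (fun U => U ⊓ H = W))
      (g := fun S : Finset L => S.inf id) (fun S hS => by simpa using (Finset.mem_filter.1 hS).2)]
  refine Finset.sum_congr rfl fun U hU => ?_
  rw [altSum, Finset.filter_filter]
  refine Finset.sum_congr (Finset.filter_congr fun S _ => ?_) fun _ _ => rfl
  exact ⟨fun h => ⟨by rw [h]; exact (Finset.mem_filter.1 hU).2, h⟩, fun h => h.2⟩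

section Subspaces

variable {F V : Type*} [Field F] [AddCommGroup V] [Module F V]

lemma finrank_of_inf_eq [FiniteDimensional F V] {U H W : Submodule F V}
    (hH : Module.finrank F H + 1 = Module.finrank F V) (hU : U ⊓ H = W) (hne : U ≠ W) :
    Module.finrank F U = Module.finrank F W + 1 := by
  have hlt : H < U ⊔ H := by
    refine lt_of_le_of_ne le_sup_right fun h => hne ?_
    rw [← hU, inf_eq_left.2 (h ▸ le_sup_left)]
  have h1 := Submodule.finrank_lt_finrank_of_lt hlt
  have h2 := Submodule.finrank_le (U ⊔ H)
  have h3 := Submodule.finrank_sup_add_finrank_inf_eq U H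
  rw [hU] at h3
  omega

lemma exists_inf_eq {H W : Submodule F V} (hWH : W ≤ H) (hH : H ≠ ⊤) :
    ∃ U : Submodule F V, U ⊓ H = W ∧ U ≠ W := by
  obtain ⟨v, -, hv⟩ := SetLike.exists_of_lt hH.lt_top
  refine ⟨W ⊔ F ∙ v, ?_, fun h => hv (hWH ?_)⟩
  · rw [sup_inf_assoc_of_le _ hWH]
    have hd : Disjoint (F ∙ v) H := ((Submodule.disjoint_span_singleton_of_notMem hv)).symm
    rw [hd.eq_bot, sup_bot_eq]
  · exact h ▸ Submodule.mem_sup_right (Submodule.mem_span_singleton_self v)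

lemma exists_hyperplane_ge [FiniteDimensional F V] {W : Submodule F V} (hW : W ≠ ⊤) :
    ∃ H : Submodule F V, W ≤ H ∧ Module.finrank F H + 1 = Module.finrank F V := by
  obtain ⟨f, hf, hle⟩ := Submodule.exists_le_ker_of_lt_top W hW.lt_top
  exact ⟨LinearMap.ker f, hle, Module.Dual.finrank_ker_add_one_of_ne_zero hf⟩

end Subspaces

/-- `altSum` over the hyperplanes has the sign given by the parity of the codimension. -/
lemma altSum_sign {F V : Type*} [Field F] [AddCommGroup V] [Module F V] [FiniteDimensional F V]
    [Finite V] (A : Finset (Submodule F V))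
    (hA : ∀ p : Submodule F V, p ∈ A ↔ Module.finrank F p + 1 = Module.finrank F V) (k : ℕ) :
    ∀ W : Submodule F V, Module.finrank F W + k = Module.finrank F V →
      0 < (-1 : ℤ) ^ k * altSum A W := by
  classical
  have : Fintype (Submodule F V) := Fintype.ofFinite _
  have hntop : ∀ p ∈ A, p ≠ ⊤ := by
    rintro p hp rfl
    have := (hA _).1 hp
    rw [finrank_top] at this
    omega
  induction k with
  | zero =>
    intro W hW
    obtain rfl : W = ⊤ := Submodule.eq_top_of_finrank_eq hW
    have : A.powerset.filter (fun S => S.inf id = ⊤) = {∅} := by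
      ext S
      simp only [Finset.mem_filter, Finset.mem_powerset, Finset.mem_singleton]
      refine ⟨fun ⟨hS, h⟩ => Finset.eq_empty_of_forall_notMem fun p hp => ?_, ?_⟩
      · exact hntop p (hS hp) ((Finset.inf_eq_top_iff _ _).1 h p hp)
      · rintro rfl
        simp
    have h1 : altSum A ⊤ = 1 := by
      unfold altSum
      calc _ = ∑ S ∈ ({∅} : Finset (Finset (Submodule F V))), (-1 : ℤ) ^ S.card := by
            rw [← this]; congr!
        _ = 1 := by simp
    simp [h1]
  | succ k ih =>
    intro W hW
    have hWt : W ≠ ⊤ := by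
      rintro rfl
      rw [finrank_top] at hW
      omega
    obtain ⟨H, hWH, hH⟩ := exists_hyperplane_ge hWt
    have hHA := (hA H).2 hH
    have hsum : ∑ U ∈ Finset.univ.filter (fun U => U ⊓ H = W), altSum A U = 0 := by
      convert sum_altSum_eq_zero A H W hHA
    have hWm : W ∈ Finset.univ.filter (fun U => U ⊓ H = W) := by simpa using hWH
    rw [← Finset.add_sum_erase _ _ hWm] at hsum
    have hpos : 0 < ∑ U ∈ (Finset.univ.filter (fun U => U ⊓ H = W)).erase W,
        (-1 : ℤ) ^ k * altSum A U := by
      refine Finset.sum_pos (fun U hU => ih U ?_) ?_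
      · obtain ⟨hne, hU⟩ := Finset.mem_erase.1 hU
        have := finrank_of_inf_eq hH (Finset.mem_filter.1 hU).2 hne
        omega
      · obtain ⟨U, hU, hne⟩ := exists_inf_eq hWH (hntop H hHA)
        exact ⟨U, by simp [hU, hne]⟩
    rw [← Finset.mul_sum] at hpos
    rw [eq_neg_of_add_eq_zero_left hsum, pow_succ]
    linarith


open Classical in
/-- Let `F` be a finite field with `q` elements, `V = Fin b → F`, and
let `ℋ` be the set of hyperplanes (subspaces of dimension `b − 1`) of `V`.  For every
subspace `W` of `V`, the alternating sum `∑_{S ⊆ ℋ, ⋂S = W} (−1)^{|S|}` is nonzero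
(empty intersection being `V`). -/
theorem alternating_sum_over_hyperplane_subsets_ne_zero
    (F : Type*) [Field F] [Fintype F] (q b : ℕ) (hq : Fintype.card F = q)
    (ℋ : Finset (Submodule F (Fin b → F)))
    (hℋ : ∀ p : Submodule F (Fin b → F), p ∈ ℋ ↔ Module.finrank F ↥p + 1 = b)
    (W : Submodule F (Fin b → F)) :
    ∑ S ∈ ℋ.powerset.filter (fun S => S.inf id = W), (-1 : ℤ) ^ S.card ≠ 0 := by
  have hle : Module.finrank F W ≤ b := by simpa using Submodule.finrank_le W
  have h := altSum_sign ℋ (by simpa using hℋ) (b - Module.finrank F W) W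
    (by rw [Module.finrank_fin_fun]; omega)
  exact right_ne_zero_of_mul h.ne'
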